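/- arXiv:2307.00657 — 10 statements merged into one kernel-verified Lean document; each statement's English description precedes it below -/
import Mathlib

section
/- Let c > 0 and κ > 0 with κ ≠ 1/2. Define M(τ) = ((κ-τ)(1-2τ)²/(2κ-1)²) · f_κ(τ) for 0 ≤ τ < min(κ, 1/2). Then M(0) = c/2 and M'(τ) = -1 - 4M(τ)/(1-2τ) - M(τ)/(κ-τ) for all 0 ≤ τ < min(κ, 1/2). -/
/-! Write `M = P * f` with `P τ = (κ-τ)(1-2τ)²/(2κ-1)²`. The prefactor solves the homogeneous
equation `P' = -4P/(1-2τ) - P/(κ-τ)`, and `f` satisfies `f' = -1/P`: the derivatives of the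
logarithmic and rational terms combine to
`(2κ-1)((1-2τ) - 2(κ-τ)) / ((κ-τ)(1-2τ)²) = -(2κ-1)²/((κ-τ)(1-2τ)²)`.
The product rule then gives the inhomogeneous equation (variation of constants). -/

/-- For `κ ≠ 1/2`, the function `M(τ) = ((κ-τ)(1-2τ)²/(2κ-1)²)·f_κ(τ)` satisfies `M(0) = c/2`
and the GREEDY differential equation `M'(τ) = -1 - 4M(τ)/(1-2τ) - M(τ)/(κ-τ)` on
`[0, min(κ, 1/2))`. -/
theorem greedy_ode_solution_general (c κ : ℝ) (hc : 0 < c) (hκ : 0 < κ) (hne : κ ≠ 1/2) :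
    let f : ℝ → ℝ := fun τ =>
      c*(2*κ-1)^2/(2*κ) + Real.log ((κ-τ)/(κ*(1-2*τ))) - 2*(2*κ-1)*τ/(1-2*τ)
    let M : ℝ → ℝ := fun τ => ((κ-τ)*(1-2*τ)^2/(2*κ-1)^2) * f τ
    M 0 = c/2 ∧
    ∀ τ : ℝ, 0 ≤ τ → τ < min κ (1/2) →
      HasDerivAt M (-1 - 4*M τ/(1-2*τ) - M τ/(κ-τ)) τ := by
  intro f M
  have hd : 2*κ-1 ≠ 0 := fun h => hne (by linarith)
  have hκ0 : κ ≠ 0 := hκ.ne'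
  refine ⟨?_, ?_⟩
  · simp only [M, f]
    simp only [sub_zero, mul_zero, mul_one, div_self hκ0, Real.log_one, zero_div, add_zero, one_pow]
    generalize 2*κ-1 = d at hd ⊢
    field_simp
  · intro τ _ hτ
    have h1 : κ - τ ≠ 0 := (sub_pos.2 (hτ.trans_le (min_le_left _ _))).ne'
    have h2 : 1 - 2*τ ≠ 0 := by
      have := hτ.trans_le (min_le_right κ (1/2))
      exact ne_of_gt (by linarith)
    have d1 : HasDerivAt (fun t : ℝ => κ - t) (-1) τ := (hasDerivAt_id τ).const_sub κ
    have d2 : HasDerivAt (fun t : ℝ => 1 - 2*t) (-2) τ := by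
      simpa using ((hasDerivAt_id τ).const_mul 2).const_sub 1
    have d3 : HasDerivAt (fun t : ℝ => 2*(2*κ-1)*t) (2*(2*κ-1)) τ := by
      simpa using (hasDerivAt_id τ).const_mul (2*(2*κ-1))
    have hf : HasDerivAt f (-(2*κ-1)^2/((κ-τ)*(1-2*τ)^2)) τ := by
      have hlog := (d1.fun_div (d2.const_mul κ) (mul_ne_zero hκ0 h2)).log
        (div_ne_zero h1 (mul_ne_zero hκ0 h2))
      refine ((hlog.const_add (c*(2*κ-1)^2/(2*κ))).fun_sub (d3.fun_div d2 h2)).congr_deriv ?_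
      field_simp
      ring
    have hP : HasDerivAt (fun t : ℝ => (κ-t)*(1-2*t)^2/(2*κ-1)^2)
        ((-(1-2*τ)^2 - 4*(κ-τ)*(1-2*τ))/(2*κ-1)^2) τ := by
      refine ((d1.fun_mul (d2.fun_pow 2)).div_const ((2*κ-1)^2)).congr_deriv ?_
      congr 1
      push_cast
      ring
    refine (hP.fun_mul hf).congr_deriv ?_
    -- The value `f τ` enters linearly, so it is treated as an indeterminate.
    simp only [M]
    generalize f τ = y
    field_simp
    ring
end

section
/- Let c > 0 and κ > 0 with κ ≠ 1/2. Then f_κ(0) = c(2κ-1)²/(2κ) > 0, and f_κ is strictly decreasing on the interval [0, min(κ, 1/2)); indeed f_κ'(τ) = -(2κ-1)²/((κ-τ)(1-2τ)²) < 0 there. -/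
/-! The logarithmic term has derivative `(2κ-1)/((κ-τ)(1-2τ))` and the rational term has derivative
`2(2κ-1)/(1-2τ)²`; their difference is `-(2κ-1)²/((κ-τ)(1-2τ)²)` because
`(1-2τ) - 2(κ-τ) = -(2κ-1)`. This is negative for `0 ≤ τ < min(κ, 1/2)`, so the mean value theorem
on this interval gives strict monotonicity. -/

theorem greedy_f_strictAnti (c κ : ℝ) (hc : 0 < c) (hκ : 0 < κ) (hne : κ ≠ 1/2) :
    let f : ℝ → ℝ := fun τ =>
      c*(2*κ-1)^2/(2*κ) + Real.log ((κ-τ)/(κ*(1-2*τ))) - 2*(2*κ-1)*τ/(1-2*τ)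
    f 0 = c*(2*κ-1)^2/(2*κ) ∧ 0 < c*(2*κ-1)^2/(2*κ) ∧
    StrictAntiOn f (Set.Ico 0 (min κ (1/2))) ∧
    ∀ τ ∈ Set.Ico (0:ℝ) (min κ (1/2)),
      HasDerivAt f (-(2*κ-1)^2/((κ-τ)*(1-2*τ)^2)) τ ∧
      -(2*κ-1)^2/((κ-τ)*(1-2*τ)^2) < 0 := by
  intro f
  have hsq : 0 < (2*κ-1)^2 := by
    have : 2*κ-1 ≠ 0 := fun h => hne (by linarith)
    positivity
  have key : ∀ τ ∈ Set.Ico (0:ℝ) (min κ (1/2)),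
      HasDerivAt f (-(2*κ-1)^2/((κ-τ)*(1-2*τ)^2)) τ ∧
      -(2*κ-1)^2/((κ-τ)*(1-2*τ)^2) < 0 := by
    rintro τ ⟨-, hτ⟩
    obtain ⟨h1, h2⟩ := lt_min_iff.mp hτ
    have a : 0 < κ - τ := by linarith
    have b : 0 < 1 - 2*τ := by linarith
    refine ⟨?_, div_neg_of_neg_of_pos (by linarith) (by positivity)⟩
    have d1 : HasDerivAt (fun t : ℝ => κ - t) (-1) τ := (hasDerivAt_id τ).const_sub κ
    have d2 : HasDerivAt (fun t : ℝ => 1 - 2*t) (-(2*1)) τ :=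
      ((hasDerivAt_id τ).const_mul 2).const_sub 1
    have d3 : HasDerivAt (fun t : ℝ => 2*(2*κ-1)*t) (2*(2*κ-1)*1) τ :=
      (hasDerivAt_id τ).const_mul _
    have hlog := (d1.div (d2.const_mul κ) (by positivity)).log (by
      have : 0 < (κ-τ)/(κ*(1-2*τ)) := by positivity
      exact this.ne')
    have h := (hlog.const_add (c*(2*κ-1)^2/(2*κ))).sub (d3.div d2 b.ne')
    refine h.congr_deriv ?_
    simp only [Pi.div_apply]
    have ha := a.ne'
    have hb := b.ne'
    field_simp
    ring
  refine ⟨?_, by positivity, ?_, key⟩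
  · simp [f, hκ.ne']
  · refine strictAntiOn_of_deriv_neg (convex_Ico _ _)
      (fun τ hτ => (key τ hτ).1.continuousAt.continuousWithinAt) fun τ hτ => ?_
    have hτ' := key τ (interior_subset hτ)
    rw [hτ'.1.deriv]
    exact hτ'.2
end

section
/- Let α > 0 with √(2α) < 1, and suppose h ∈ (0,1) satisfies α - h + log(1+h) = 0. Then √(2α) ≤ h ≤ √(2α/(1 - √(2α))). -/
/-!
Write `s = √(2α)`, so that `s² = 2(h - log (1+h))`. The bound `log (1+h) ≥ 2h/(h+2) ≥ h - h²/2`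
gives `s² ≤ h²`, the lower estimate. The cubic upper bound for the logarithm only yields
`h²(1-h) ≤ s²`, which is weaker than needed since `s ≤ h`. The sharper bound
`log x ≤ sinh (log x) = (x - x⁻¹)/2` at `x = 1+h` gives instead `h² ≤ s²(1+h)`, and then
`h² - s² ≤ s·s·h ≤ s·h·h` is the upper estimate `h²(1-s) ≤ s²`.
-/

/-- Case `κ > 1/2` root estimate: if `α > 0` with `√(2α) < 1` and `h ∈ (0,1)` satisfies
`α - h + log(1+h) = 0`, then `√(2α) ≤ h ≤ √(2α/(1-√(2α)))`. -/
theorem root_estimate_pos (α h : ℝ) (hα : 0 < α) (hs : Real.sqrt (2*α) < 1)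
    (hh0 : 0 < h) (hh1 : h < 1) (heq : α - h + Real.log (1+h) = 0) :
    Real.sqrt (2*α) ≤ h ∧ h ≤ Real.sqrt (2*α/(1 - Real.sqrt (2*α))) := by
  have hlow : h - h^2/2 ≤ Real.log (1+h) := by
    refine le_trans ?_ (Real.le_log_one_add_of_nonneg hh0.le)
    rw [le_div_iff₀ (by linarith)]
    nlinarith [pow_pos hh0 3]
  have hup : h^2 ≤ 2*α*(1+h) := by
    have h1 : Real.log (1+h) ≤ Real.sinh (Real.log (1+h)) :=
      Real.self_le_sinh_iff.2 (Real.log_nonneg (by linarith))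
    rw [Real.sinh_log (by linarith)] at h1
    have h2 : (1+h) * (1+h)⁻¹ = 1 := mul_inv_cancel₀ (by linarith)
    have h3 := mul_le_mul_of_nonneg_left h1 (show 0 ≤ 1+h by linarith)
    have h4 : Real.log (1+h) = h - α := by linarith
    rw [h4] at h3
    nlinarith
  have hsh : Real.sqrt (2*α) ≤ h := Real.sqrt_le_iff.2 ⟨hh0.le, by linarith⟩
  refine ⟨hsh, Real.le_sqrt_of_sq_le ?_⟩
  have hsq : Real.sqrt (2*α) ^ 2 = 2*α := Real.sq_sqrt (by linarith)
  have hs0 := Real.sqrt_nonneg (2*α)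
  rw [le_div_iff₀ (by linarith)]
  have h5 := mul_le_mul_of_nonneg_left hsh (mul_nonneg hs0 hh0.le)
  have h6 : Real.sqrt (2*α) ^ 2 * h = 2*α*h := by rw [hsq]
  linarith
end

section
/- Let α > 0, and suppose h ∈ (-1/3, 0) satisfies α - h + log(1+h) = 0. Then √(2α/(1 + √(2α))) ≤ |h| ≤ √(2α). -/
/-!
With `x = -h ∈ (0, 1/3)` the equation reads `α = -x - log (1 - x) = x²/2 + x³/3 + x⁴/4 + ⋯`,
and on this range `x² ≤ 2α ≤ x² + x³` (`sq_le_neg_log_le`). The left inequality is the upper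
bound `x ≤ √(2α)`. It also gives `2α / (1 + √(2α)) ≤ (x² + x³) / (1 + x) = x²`, which is the
lower bound.
-/

/-- The series of `-log (1 - x)` is compared with its partial sum up to `x⁵/5`: this is the
shortest one for which Mathlib's remainder bound `x⁶ / (1 - x)` is small enough to yield the
constant `1` in front of `x³` on the whole interval `(0, 1/3)`. -/
lemma sq_le_neg_log_le {x : ℝ} (hx0 : 0 < x) (hx1 : x < 1/3) :
    x^2 ≤ 2 * (-x - Real.log (1 - x)) ∧ 2 * (-x - Real.log (1 - x)) ≤ x^2 + x^3 := by
  have habs : |x| = x := abs_of_pos hx0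
  have h := Real.abs_log_sub_add_sum_range_le (x := x) (by rw [habs]; linarith) 5
  rw [habs] at h
  have hrem : x^(5+1) / (1 - x) ≤ x^3 * (1/18) := by
    rw [div_le_iff₀ (by linarith)]
    have h3 : x^3 ≤ (1/3)^3 := by gcongr
    have : x^3 * x^3 ≤ x^3 * ((1/18) * (1 - x)) := by
      gcongr
      linarith
    linarith
  have h4 : x^4 ≤ x^3 * (1/3) := by
    rw [pow_succ]
    gcongr
  have h5 : x^5 ≤ x^3 * (1/3)^2 := by
    rw [pow_add x 3 2]
    gcongr
  have p3 : 0 < x^3 := by positivity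
  have p4 : 0 < x^4 := by positivity
  have p5 : 0 < x^5 := by positivity
  norm_num [Finset.sum_range_succ] at h hrem
  obtain ⟨h1, h2⟩ := abs_le.1 h
  constructor <;> linarith

/-- Case `κ < 1/2` root estimate: if `α > 0` and `h ∈ (-1/3, 0)` satisfies
`α - h + log(1+h) = 0`, then `√(2α/(1+√(2α))) ≤ |h| ≤ √(2α)`. -/
theorem root_estimate_neg (α h : ℝ) (hα : 0 < α)
    (hh0 : -(1/3) < h) (hh1 : h < 0) (heq : α - h + Real.log (1+h) = 0) :
    Real.sqrt (2*α/(1 + Real.sqrt (2*α))) ≤ |h| ∧ |h| ≤ Real.sqrt (2*α) := by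
  obtain ⟨x, rfl⟩ : ∃ x, h = -x := ⟨-h, by ring⟩
  have hx0 : 0 < x := by linarith
  rw [abs_neg, abs_of_pos hx0]
  rw [← sub_eq_add_neg] at heq
  obtain ⟨h1, h2⟩ := sq_le_neg_log_le hx0 (by linarith)
  have hα' : -x - Real.log (1 - x) = α := by linarith
  rw [hα'] at h1 h2
  have hs : x ≤ Real.sqrt (2*α) := Real.le_sqrt_of_sq_le h1
  refine ⟨?_, hs⟩
  rw [Real.sqrt_le_left hx0.le, div_le_iff₀ (by positivity)]
  calc 2*α ≤ x^2 * (1 + x) := by linarith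
    _ ≤ x^2 * (1 + Real.sqrt (2*α)) := by gcongr
end

section
/- For every c > 0 there exist ε₀ > 0 and C > 0 such that the following holds: for every real ε with 0 < |ε| < ε₀, setting κ = (1+ε)/2, any τ₀ ∈ [0, min(κ, 1/2)) with f_κ(τ₀) = 0 satisfies |τ₀ - (1/2)(1 - 1/√(2c+1))| ≤ C|ε|. -/
/-!
Put `g u = u - log (1 + u)`, which is `u ^ 2 / 2 + O(|u| ^ 3)` near `0`, and `y = 1 / (1 - 2 * τ₀)`,
so `y ≥ 1`. With `κ = (1 + ε) / 2` the logarithm in `f_κ` is `log ((1 + ε * y) / (1 + ε))` and the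
last term is `ε * (y - 1)`, so `f_κ(τ₀) = 0` says exactly
`g (ε * y) = g ε + c * ε ^ 2 / (1 + ε)`. To leading order this is `y ^ 2 = 2 * c + 1`, and
`τ₀ = (1 - 1 / y) / 2` is the claimed value.

The expansion of `g` at `ε * y` is legitimate only once `y` is known to be bounded. This comes from
the lower bound `v ^ 2 ≤ (4 + 2 * v) * g v` (`sq_le_mul_sub_log`), valid for all `v > -1`:
combined with `g (ε * y) = O(ε ^ 2)` it forces `y ^ 2 ≤ 6 * (2 * c + 2)`. The Taylor estimate
`abs_sub_log_sub_sq_le` then gives `|y ^ 2 - (2 * c + 1)| = O(|ε|)`.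
-/

/-- A lower bound for `v - log (1 + v)` on its whole domain. It follows from
`log s ≤ s - 1` at `s = √(1 + v)`, which gives `v - log (1 + v) ≥ (s - 1) ^ 2`. -/
lemma sq_le_mul_sub_log {v : ℝ} (hv : -1 < v) :
    v ^ 2 ≤ (4 + 2 * v) * (v - Real.log (1 + v)) := by
  obtain ⟨s, hs, hsv⟩ : ∃ s : ℝ, 0 < s ∧ 1 + v = s ^ 2 :=
    ⟨√(1 + v), Real.sqrt_pos.2 (by linarith), (Real.sq_sqrt (by linarith)).symm⟩
  have hlog : Real.log (1 + v) ≤ 2 * (s - 1) := by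
    rw [hsv, Real.log_pow]
    have := Real.log_le_sub_one_of_pos hs
    push_cast
    linarith
  have hg : (s - 1) ^ 2 ≤ v - Real.log (1 + v) := by nlinarith
  have hv' : v = s ^ 2 - 1 := by linarith
  calc v ^ 2 = (s + 1) ^ 2 * (s - 1) ^ 2 := by rw [hv']; ring
    _ ≤ (4 + 2 * v) * (s - 1) ^ 2 := by
        apply mul_le_mul_of_nonneg_right _ (sq_nonneg _)
        nlinarith [sq_nonneg (s - 1)]
    _ ≤ _ := mul_le_mul_of_nonneg_left hg (by linarith)

lemma abs_sub_log_sub_sq_le {u : ℝ} (hu : |u| ≤ 1 / 2) :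
    |u - Real.log (1 + u) - u ^ 2 / 2| ≤ 2 * |u| ^ 3 := by
  have h := Real.abs_log_sub_add_sum_range_le (x := -u) (by rw [abs_neg]; linarith) 2
  simp only [Finset.sum_range_succ, Finset.sum_range_zero, abs_neg, sub_neg_eq_add] at h
  have h2 : |u| ^ (2 + 1) / (1 - |u|) ≤ 2 * |u| ^ 3 := by
    rw [div_le_iff₀ (by linarith)]
    have : 0 ≤ |u| ^ 3 := by positivity
    norm_num
    nlinarith
  refine le_trans (le_of_eq ?_) (h.trans h2)
  rw [← abs_neg]
  congr 1
  push_cast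
  ring

/-- The equation `f_κ(τ) = 0` in terms of `v ↦ v - log (1 + v)` and `y = 1 / (1 - 2 * τ)`. -/
lemma root_eq {c ε τ y : ℝ} (hε : -1 < ε) (hy : 0 < y) (hτ : τ = (1 - 1 / y) / 2)
    (hpos : 0 < 1 + ε * y)
    (h : c*(2*((1+ε)/2)-1)^2/(2*((1+ε)/2))
          + Real.log ((((1+ε)/2)-τ)/(((1+ε)/2)*(1-2*τ)))
          - 2*(2*((1+ε)/2)-1)*τ/(1-2*τ) = 0) :
    ε * y - Real.log (1 + ε * y) = (ε - Real.log (1 + ε)) + c * ε ^ 2 / (1 + ε) := by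
  have hε' : 0 < 1 + ε := by linarith
  have h1 : (((1+ε)/2)-τ)/(((1+ε)/2)*(1-2*τ)) = (1 + ε * y) / (1 + ε) := by
    have : 1 - 2 * τ = 1 / y := by rw [hτ]; ring
    rw [this, hτ]
    field_simp
    ring
  have h2 : 2*(2*((1+ε)/2)-1)*τ/(1-2*τ) = ε * (y - 1) := by
    have : 1 - 2 * τ = 1 / y := by rw [hτ]; ring
    rw [this, hτ]
    field_simp
    ring
  have h3 : c*(2*((1+ε)/2)-1)^2/(2*((1+ε)/2)) = c * ε ^ 2 / (1 + ε) := by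
    congr 1 <;> ring
  rw [h1, h2, h3, Real.log_div hpos.ne' hε'.ne'] at h
  linarith

/-- Any solution `y` of the reformulated equation has `y ^ 2 = 2 * c + 1 + O(|ε|)`. A priori bounds
on `ε * y` and `y` come first, since the Taylor estimate needs `|ε * y| ≤ 1 / 2`. -/
lemma abs_sq_sub_le {c ε y : ℝ} (hc : 0 < c) (hε0 : 0 < |ε|)
    (hε : |ε| < 1 / (24 * (2 * c + 2))) (hy : 1 ≤ y) (hpos : 0 < 1 + ε * y)
    (h : ε * y - Real.log (1 + ε * y) = (ε - Real.log (1 + ε)) + c * ε ^ 2 / (1 + ε)) :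
    |y ^ 2 - (2 * c + 1)| ≤ (4 * (1 + (6 * (2 * c + 2)) ^ 2) + 4 * c) * |ε| := by
  set K := 2 * c + 2 with hK
  have hK2 : 2 < K := by linarith
  have hKε : |ε| * (24 * K) < 1 := by rwa [lt_div_iff₀ (by linarith)] at hε
  have hεs : |ε| ≤ 1 / 48 := by nlinarith
  have hsq : |ε| ^ 2 = ε ^ 2 := sq_abs ε
  have hεsq : 0 < ε ^ 2 := by rw [← hsq]; positivity
  have hKε2 : 24 * K * ε ^ 2 ≤ 1 / 48 := by rw [← hsq]; nlinarith
  have hlow : -(1 / 48) ≤ ε := (abs_le.1 hεs).1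
  have hTε := abs_le.1 (abs_sub_log_sub_sq_le (u := ε) (by linarith))
  have hcube : |ε| ^ 3 = |ε| * ε ^ 2 := by rw [← hsq]; ring
  have hdiv : c * ε ^ 2 / (1 + ε) = c * ε ^ 2 - c * ε ^ 2 * ε / (1 + ε) := by
    have : 1 + ε ≠ 0 := by linarith
    field_simp
    ring
  have hrem : |c * ε ^ 2 * ε / (1 + ε)| ≤ 2 * c * |ε| * ε ^ 2 := by
    have h1 : (0 : ℝ) < 1 + ε := by linarith
    rw [abs_div, abs_mul, abs_of_pos h1, abs_of_pos (by positivity : 0 < c * ε ^ 2),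
      div_le_iff₀ h1]
    have : 0 < c * ε ^ 2 * |ε| := by positivity
    nlinarith
  have hrem' := abs_le.1 hrem
  have hcε : 0 < c * ε ^ 2 := by positivity
  have hG : ε * y - Real.log (1 + ε * y) ≤ K * ε ^ 2 := by
    rw [h, hdiv]
    nlinarith [hTε.2, hrem'.1]
  have hv := sq_le_mul_sub_log (v := ε * y) (by linarith)
  have hv2 : (ε * y) ^ 2 ≤ (4 + 2 * (ε * y)) * (K * ε ^ 2) :=
    hv.trans (mul_le_mul_of_nonneg_left hG (by linarith))
  -- For `ε > 0` the factor `4 + 2 * (ε * y)` is not yet bounded; `K * ε ^ 2` being small excludes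
  -- `ε * y > 1`, as the right side grows only linearly in `ε * y`.
  have hv1 : ε * y ≤ 1 := by
    by_contra! hlt
    nlinarith
  have hv6 : (ε * y) ^ 2 ≤ 6 * K * ε ^ 2 := by
    have : 0 < K * ε ^ 2 := by positivity
    nlinarith
  have hyM : y ^ 2 ≤ 6 * K := by
    rw [mul_pow] at hv6
    exact le_of_mul_le_mul_left (by linarith) hεsq
  have hvh : |ε * y| ≤ 1 / 2 := abs_le_of_sq_le_sq (by nlinarith) (by norm_num)
  have hTv := abs_le.1 (abs_sub_log_sub_sq_le hvh)
  have hy3 : y ^ 3 ≤ (6 * K) ^ 2 := by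
    have : y ^ 3 ≤ (y ^ 2) ^ 2 := by rw [← pow_mul]; exact pow_le_pow_right₀ hy (by norm_num)
    exact this.trans (pow_le_pow_left₀ (by positivity) hyM 2)
  have hcubev : |ε * y| ^ 3 ≤ |ε| * ε ^ 2 * (6 * K) ^ 2 := by
    rw [abs_mul, mul_pow, hcube, abs_of_pos (by linarith : 0 < y)]
    exact mul_le_mul_of_nonneg_left hy3 (by positivity)
  have hfin : |ε ^ 2 * (y ^ 2 - (2 * c + 1))| ≤
      ε ^ 2 * ((4 * (1 + (6 * K) ^ 2) + 4 * c) * |ε|) := by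
    rw [hdiv] at h
    rw [hcube] at hTε
    rw [abs_le]
    constructor <;> nlinarith only [hTε.1, hTε.2, hTv.1, hTv.2, hrem'.1, hrem'.2, hcubev, h]
  rw [abs_mul, abs_of_pos hεsq] at hfin
  exact le_of_mul_le_mul_left hfin hεsq

lemma abs_inv_sub_inv_le {y r : ℝ} (hy : 1 ≤ y) (hr : 1 ≤ r) :
    |1 / r - 1 / y| ≤ |y ^ 2 - r ^ 2| := by
  have h1 : 1 / r - 1 / y = (y - r) / (r * y) := by
    have : r ≠ 0 := by linarith
    have : y ≠ 0 := by linarith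
    field_simp
  have hry : 1 ≤ r * y := by nlinarith
  have h2 : y ^ 2 - r ^ 2 = (y - r) * (y + r) := by ring
  rw [h1, h2, abs_div, abs_of_pos (by linarith : 0 < r * y), abs_mul,
    abs_of_pos (by linarith : 0 < y + r)]
  exact (div_le_self (abs_nonneg _) hry).trans
    (le_mul_of_one_le_right (abs_nonneg _) (by linarith))

/-- Lemma `k1/2` of the paper: for `κ = (1+ε)/2` with `|ε|` small and positive, any root
`τ₀ ∈ [0, min(κ, 1/2))` of `f_κ` satisfies `τ₀ = (1/2)(1 - 1/√(2c+1)) + O(ε)`. -/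
theorem greedy_root_near_half (c : ℝ) (hc : 0 < c) :
    ∃ ε₀ > (0:ℝ), ∃ C > (0:ℝ), ∀ ε : ℝ, 0 < |ε| → |ε| < ε₀ →
      ∀ τ₀ : ℝ, 0 ≤ τ₀ → τ₀ < min ((1+ε)/2) (1/2) →
        c*(2*((1+ε)/2)-1)^2/(2*((1+ε)/2))
          + Real.log ((((1+ε)/2)-τ₀)/(((1+ε)/2)*(1-2*τ₀)))
          - 2*(2*((1+ε)/2)-1)*τ₀/(1-2*τ₀) = 0 →
        |τ₀ - (1/2)*(1 - 1/Real.sqrt (2*c+1))| ≤ C*|ε| := by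
  refine ⟨1 / (24 * (2 * c + 2)), by positivity,
    4 * (1 + (6 * (2 * c + 2)) ^ 2) + 4 * c, by positivity, ?_⟩
  intro ε hε0 hε τ hτ0 hτ h
  obtain ⟨hτκ, hτh⟩ := lt_min_iff.1 hτ
  have hs : 0 < 1 - 2 * τ := by linarith
  obtain ⟨y, hy⟩ : ∃ y : ℝ, y = 1 / (1 - 2 * τ) := ⟨_, rfl⟩
  have hy1 : 1 ≤ y := by rw [hy, le_div_iff₀ hs]; linarith
  have hτy : τ = (1 - 1 / y) / 2 := by rw [hy, one_div_one_div]; ring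
  have hpos : 0 < 1 + ε * y := by
    have : 1 + ε * y = (1 + ε - 2 * τ) / (1 - 2 * τ) := by
      rw [hy]; field_simp; ring
    rw [this]
    exact div_pos (by linarith) hs
  have heq := root_eq (by linarith) (by linarith) hτy hpos h
  have hb := abs_sq_sub_le hc hε0 hε hy1 hpos heq
  have hr : 1 ≤ √(2 * c + 1) := Real.one_le_sqrt.2 (by linarith)
  have hi := abs_inv_sub_inv_le hy1 hr
  rw [Real.sq_sqrt (by linarith)] at hi
  have hd : τ - (1/2)*(1 - 1/√(2*c+1)) = (1 / √(2 * c + 1) - 1 / y) / 2 := by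
    rw [hτy]; ring
  rw [hd, abs_div, abs_two]
  have := abs_nonneg (1 / √(2 * c + 1) - 1 / y)
  linarith
end

section
/- Let c > 5 and 0 < κ < 1/(2c). Then there is a unique τ₀ ∈ [0, κ) with f_κ(τ₀) = 0, and it satisfies κ(1 - e^{-c/(2κ) + 2c}) < τ₀ < κ(1 - e^{-c/(2κ)}). -/
/-!
Under the substitution `x = (κ - τ) / (1 - 2τ)`, which is strictly decreasing in `τ` and maps
`[0, κ)` into `(0, κ]`, one has `2(1 - 2κ)τ / (1 - 2τ) = 2κ - 2x`, so that
`f_κ(τ) = const + log (x / κ) - 2x`. As `log x - 2x` is strictly increasing on `(0, 1/2)`, the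
function `f_κ` is strictly decreasing on `[0, κ)` (`greedyFun_strictAntiOn`).

Writing `τ = κ(1 - e^E)` gives `log ((κ - τ) / (κ(1 - 2τ))) = E - log (1 - 2τ)`
(`greedyFun_apply_exp`). Evaluating at `E = -c/(2κ) + 2c` makes `f_κ` positive, and evaluating at
`E = -c/(2κ)` makes it negative (the surviving `-2c` dominates all other terms). The intermediate
value theorem gives a root, and monotonicity gives uniqueness and both bounds.
-/

/-- The function `f_κ` with parameters `c` and `κ`. -/
noncomputable def greedyFun (c κ τ : ℝ) : ℝ :=
  c*(2*κ-1)^2/(2*κ) + Real.log ((κ-τ)/(κ*(1-2*τ))) - 2*(2*κ-1)*τ/(1-2*τ)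

/-- `f_κ` in terms of `x = (κ - τ) / (1 - 2τ)`. -/
lemma greedyFun_eq {c κ τ : ℝ} (hκ0 : 0 < κ) (hκ : κ < 1/2) (hτ : τ < κ) :
    greedyFun c κ τ = c*(2*κ-1)^2/(2*κ) + (Real.log ((κ-τ)/(1-2*τ)) - Real.log κ)
      + (2*κ - 2*((κ-τ)/(1-2*τ))) := by
  have h1 : 0 < 1 - 2*τ := by linarith
  have h2 : 0 < κ - τ := by linarith
  have e1 : (κ-τ)/(κ*(1-2*τ)) = ((κ-τ)/(1-2*τ))/κ := by
    field_simp
  have e2 : 2*κ - 2*((κ-τ)/(1-2*τ)) = - (2*(2*κ-1)*τ/(1-2*τ)) := by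
    field_simp
    ring
  rw [greedyFun, e1, Real.log_div (by positivity) hκ0.ne', e2]
  ring

lemma log_sub_two_mul_lt {x y : ℝ} (hx : 0 < x) (hxy : x < y) (hy : y < 1/2) :
    Real.log x - 2*x < Real.log y - 2*y := by
  have hy0 : 0 < y := hx.trans hxy
  have h := Real.log_le_sub_one_of_pos (div_pos hx hy0)
  rw [Real.log_div hx.ne' hy0.ne'] at h
  have h2 : x / y - 1 < 2*x - 2*y := by
    rw [div_sub_one hy0.ne', div_lt_iff₀ hy0]
    nlinarith
  linarith

lemma greedyFun_strictAntiOn {c κ : ℝ} (hκ0 : 0 < κ) (hκ : κ < 1/2) :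
    StrictAntiOn (greedyFun c κ) (Set.Ico 0 κ) := by
  intro s hs t ht hst
  obtain ⟨hs0, hsκ⟩ := hs
  obtain ⟨ht0, htκ⟩ := ht
  rw [greedyFun_eq hκ0 hκ hsκ, greedyFun_eq hκ0 hκ htκ]
  have h1 : 0 < 1 - 2*s := by linarith
  have h2 : 0 < 1 - 2*t := by linarith
  have hlt : (κ-t)/(1-2*t) < (κ-s)/(1-2*s) := by
    rw [div_lt_div_iff₀ h2 h1]
    nlinarith
  have hhalf : (κ-s)/(1-2*s) < 1/2 := by
    rw [div_lt_div_iff₀ h1 two_pos]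
    linarith
  have := log_sub_two_mul_lt (div_pos (by linarith) h2) hlt hhalf
  linarith

lemma greedyFun_continuousOn {c κ : ℝ} (hκ0 : 0 < κ) (hκ : κ < 1/2) :
    ContinuousOn (greedyFun c κ) (Set.Ico 0 κ) := by
  have hne : ∀ τ ∈ Set.Ico 0 κ, 1 - 2*τ ≠ 0 := fun τ hτ => by linarith [hτ.2]
  have hne' : ∀ τ ∈ Set.Ico 0 κ, κ*(1 - 2*τ) ≠ 0 :=
    fun τ hτ => mul_ne_zero hκ0.ne' (hne τ hτ)
  unfold greedyFun
  refine ContinuousOn.sub (continuousOn_const.add (ContinuousOn.log ?_ ?_)) ?_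
  · exact ContinuousOn.div (by fun_prop) (by fun_prop) hne'
  · exact fun τ hτ => div_ne_zero (by linarith [hτ.2]) (hne' τ hτ)
  · exact ContinuousOn.div (by fun_prop) (by fun_prop) hne

lemma greedyFun_apply_exp {c κ τ E : ℝ} (hκ0 : 0 < κ) (hτ : τ < 1/2)
    (hE : τ = κ*(1 - Real.exp E)) :
    greedyFun c κ τ = c/(2*κ) - 2*c + 2*c*κ + E - Real.log (1-2*τ)
      + 2*(1-2*κ)*τ/(1-2*τ) := by
  have h1 : 0 < 1 - 2*τ := by linarith
  have e1 : (κ-τ)/(κ*(1-2*τ)) = Real.exp E/(1-2*τ) := by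
    have : κ - τ = κ * Real.exp E := by rw [hE]; ring
    rw [this, mul_div_mul_left _ _ hκ0.ne']
  have e2 : c*(2*κ-1)^2/(2*κ) = c/(2*κ) - 2*c + 2*c*κ := by
    field_simp
    ring
  rw [greedyFun, e1, Real.log_div (Real.exp_pos E).ne' h1.ne', Real.log_exp, e2]
  ring

/-- A point `κ(1 - e^E)` with `E < 0` lies in `(0, κ)`. -/
lemma mul_one_sub_exp_mem {κ E : ℝ} (hκ0 : 0 < κ) (hE : E < 0) :
    κ*(1 - Real.exp E) ∈ Set.Ioo 0 κ := by
  have h1 := Real.exp_pos E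
  have h2 := Real.exp_lt_one_iff.2 hE
  constructor <;> nlinarith

theorem greedy_root_small_kappa (c κ : ℝ) (hc : 5 < c) (hκ0 : 0 < κ) (hκ : κ < 1/(2*c)) :
    let f : ℝ → ℝ := fun τ =>
      c*(2*κ-1)^2/(2*κ) + Real.log ((κ-τ)/(κ*(1-2*τ))) - 2*(2*κ-1)*τ/(1-2*τ)
    (∃! τ₀ : ℝ, τ₀ ∈ Set.Ico 0 κ ∧ f τ₀ = 0) ∧
    ∀ τ₀ ∈ Set.Ico (0:ℝ) κ, f τ₀ = 0 →
      κ*(1 - Real.exp (-c/(2*κ) + 2*c)) < τ₀ ∧ τ₀ < κ*(1 - Real.exp (-c/(2*κ))) := by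
  intro f
  change (∃! τ₀ : ℝ, τ₀ ∈ Set.Ico 0 κ ∧ greedyFun c κ τ₀ = 0) ∧
    ∀ τ₀ ∈ Set.Ico (0:ℝ) κ, greedyFun c κ τ₀ = 0 →
      κ*(1 - Real.exp (-c/(2*κ) + 2*c)) < τ₀ ∧ τ₀ < κ*(1 - Real.exp (-c/(2*κ)))
  have hcκ : 2*c*κ < 1 := by
    rw [lt_div_iff₀ (by linarith)] at hκ
    linarith
  have hκ10 : κ < 1/10 := by nlinarith
  have hκ2 : κ < 1/2 := by linarith
  have hE2 : -c/(2*κ) < 0 := div_neg_of_neg_of_pos (by linarith) (by linarith)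
  have hE1 : -c/(2*κ) + 2*c < 0 := by
    have : -c/(2*κ) < -(2*c) := by
      rw [div_lt_iff₀ (by linarith)]
      nlinarith
    linarith
  have hneg : -c/(2*κ) = -(c/(2*κ)) := neg_div _ _
  have hmem1 := mul_one_sub_exp_mem hκ0 hE1
  have hmem2 := mul_one_sub_exp_mem hκ0 hE2
  have hle : κ*(1 - Real.exp (-c/(2*κ) + 2*c)) ≤ κ*(1 - Real.exp (-c/(2*κ))) := by
    have : Real.exp (-c/(2*κ)) ≤ Real.exp (-c/(2*κ) + 2*c) :=
      Real.exp_le_exp.2 (by linarith)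
    gcongr
  generalize hl : κ*(1 - Real.exp (-c/(2*κ) + 2*c)) = l at *
  generalize hu : κ*(1 - Real.exp (-c/(2*κ))) = u at *
  obtain ⟨hl0, hlκ⟩ := hmem1
  obtain ⟨hu0, huκ⟩ := hmem2
  have hfl : 0 < greedyFun c κ l := by
    rw [greedyFun_apply_exp hκ0 (by linarith) hl.symm]
    have h1 : Real.log (1-2*l) < 0 := Real.log_neg (by linarith) (by linarith)
    have h2 : 0 ≤ 2*(1-2*κ)*l/(1-2*l) :=
      div_nonneg (mul_nonneg (by linarith) hl0.le) (by linarith)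
    have h3 : 0 < 2*c*κ := by positivity
    linarith
  have hfu : greedyFun c κ u < 0 := by
    rw [greedyFun_apply_exp hκ0 (by linarith) hu.symm]
    have hd : 0 < 1 - 2*u := by linarith
    have h1 := Real.one_sub_inv_le_log_of_pos hd
    -- Crude bounds from `u < κ < 1/10` suffice, since `-2c < -10` and `2cκ < 1`.
    have h2 : (1-2*u)⁻¹ < 2 := by
      rw [inv_lt_comm₀ hd two_pos]
      linarith
    have h3 : 2*(1-2*κ)*u/(1-2*u) < 1 := by
      rw [div_lt_one hd]
      nlinarith
    linarith
  have hanti := greedyFun_strictAntiOn (c := c) hκ0 hκ2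
  have hl' : l ∈ Set.Ico 0 κ := ⟨hl0.le, hlκ⟩
  have hu' : u ∈ Set.Ico 0 κ := ⟨hu0.le, huκ⟩
  refine ⟨?_, fun t ht h0 => ⟨?_, ?_⟩⟩
  · have hsub : Set.Icc l u ⊆ Set.Ico 0 κ :=
      fun t ht => ⟨hl0.le.trans ht.1, ht.2.trans_lt huκ⟩
    obtain ⟨t, ht, h0⟩ := intermediate_value_Icc' hle
      ((greedyFun_continuousOn (c := c) hκ0 hκ2).mono hsub) ⟨hfu.le, hfl.le⟩
    exact ⟨t, ⟨hsub ht, h0⟩, fun s hs => hanti.injOn hs.1 (hsub ht) (hs.2.trans h0.symm)⟩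
  · exact (hanti.lt_iff_gt ht hl').1 (h0 ▸ hfl)
  · exact (hanti.lt_iff_gt hu' ht).1 (h0 ▸ hfu)
end

section
/- Let c > 0, κ > 0, T > 0, and let N : [0,T] → ℝ be differentiable with N(0) = 1, N(τ) > 0 and N(τ) + τ + κ - 1 > 0 for all τ ∈ [0,T], satisfying N'(τ) = exp(-(c/κ)·N(τ)·(N(τ)+τ+κ-1)) - 2. Define M(τ) = (c/(2κ))·N(τ)²·(N(τ)+τ+κ-1) and λ(τ) = 2M(τ)/N(τ). Then M(0) = c/2 and M'(τ) = λ(τ)(e^{-λ(τ)} - 2) - M(τ)(1 - e^{-λ(τ)})/(N(τ)+τ+κ-1) for all τ ∈ [0,T]. -/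
/-!
Write `Q = N + τ + κ - 1`, so that `M = (c/(2κ)) N² Q` and `λ = 2M/N = (c/κ) N Q`. The equation for `N`
thus reads `N' = e^{-λ} - 2`, whence `Q' = N' + 1 = -(1 - e^{-λ})`. The product rule gives
`M' = (c/κ) N Q N' + (c/(2κ)) N² Q'`, whose first term is `λ (e^{-λ} - 2)` and whose second term is
`-M (1 - e^{-λ}) / Q`. At `τ = 0`, `N = 1` and `Q = κ`, so `M = c/2`.
-/

/-- The explicit solution of the MODIFIED GREEDY system: if `N` solves
`N' = exp(-(c/κ)N(N+τ+κ-1)) - 2` with `N(0) = 1`, and `N > 0`, `N+τ+κ-1 > 0` on `[0,T]`, then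
`M(τ) = (c/(2κ))N(τ)²(N(τ)+τ+κ-1)` satisfies `M(0) = c/2` and
`M' = λ(e^{-λ} - 2) - M(1-e^{-λ})/(N+τ+κ-1)` where `λ = 2M/N`. -/
theorem modified_greedy_ode_solution (c κ T : ℝ) (hc : 0 < c) (hκ : 0 < κ) (hT : 0 < T)
    (N : ℝ → ℝ) (hN0 : N 0 = 1)
    (hNpos : ∀ τ ∈ Set.Icc (0:ℝ) T, 0 < N τ)
    (hQpos : ∀ τ ∈ Set.Icc (0:ℝ) T, 0 < N τ + τ + κ - 1)
    (hN' : ∀ τ ∈ Set.Icc (0:ℝ) T,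
      HasDerivAt N (Real.exp (-(c/κ) * N τ * (N τ + τ + κ - 1)) - 2) τ) :
    let M : ℝ → ℝ := fun τ => (c/(2*κ)) * (N τ)^2 * (N τ + τ + κ - 1)
    let lam : ℝ → ℝ := fun τ => 2 * M τ / N τ
    M 0 = c/2 ∧
    ∀ τ ∈ Set.Icc (0:ℝ) T,
      HasDerivAt M
        (lam τ * (Real.exp (-lam τ) - 2)
          - M τ * (1 - Real.exp (-lam τ)) / (N τ + τ + κ - 1)) τ := by
  intro M lam
  refine ⟨?_, fun τ hτ => ?_⟩
  · simp only [M, hN0]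
    field_simp
    ring
  have hN := (hNpos τ hτ).ne'
  have hQ := (hQpos τ hτ).ne'
  have hlam : lam τ = (c/κ) * N τ * (N τ + τ + κ - 1) := by
    simp only [lam, M]
    field_simp
  -- `λ` is minus the exponent in the equation for `N`, so `N' = e^{-λ} - 2`.
  have h := hN' τ hτ
  rw [show -(c/κ) * N τ * (N τ + τ + κ - 1) = -lam τ by rw [hlam]; ring] at h
  have hMdiv : M τ * (1 - Real.exp (-lam τ)) / (N τ + τ + κ - 1)
      = (c/(2*κ)) * (N τ)^2 * (1 - Real.exp (-lam τ)) := by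
    simp only [M]
    field_simp
  have hM := ((h.pow 2).const_mul (c/(2*κ))).mul
    (((h.add (hasDerivAt_id τ)).add_const κ).sub_const 1)
  refine hM.congr_deriv ?_
  rw [hMdiv]
  -- The exponential is made opaque so that the `λ` inside it is not expanded.
  generalize Real.exp (-lam τ) = e
  rw [hlam]
  simp
  field_simp
  ring
end

section
/- Let c > 0, κ > 0, T > 0, and let N : [0,T] → ℝ be differentiable with N(0) = 1, N(τ) ≥ 0 for all τ ∈ [0,T], satisfying N'(τ) = exp(-(c/κ)·N(τ)·(N(τ)+τ+κ-1)) - 2. Then Q(τ) := N(τ) + τ + κ - 1 satisfies Q(τ) ≥ κ·exp(-(c/κ)·∫₀^τ N(σ) dσ) > 0 for all τ ∈ [0,T]. -/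
/-!
Since `exp y ≥ 1 + y`, the function `Q(τ) = N(τ) + τ + κ - 1` satisfies
`Q' = exp (-(c/κ) N Q) - 1 ≥ -(c/κ) N Q`. Hence `Q(τ) * exp ((c/κ) ∫₀^τ N)` is nondecreasing
on `[0, T]`, and its value at `0` is `κ`.
-/


/-- The scaled number of unused colors `Q(τ) = N(τ)+τ+κ-1` in the MODIFIED GREEDY process
stays positive: `Q(τ) ≥ κ·exp(-(c/κ)∫₀^τ N) > 0` on `[0,T]`. -/
theorem modified_greedy_colors_positive (c κ T : ℝ) (hc : 0 < c) (hκ : 0 < κ) (hT : 0 < T)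
    (N : ℝ → ℝ) (hN0 : N 0 = 1)
    (hNnn : ∀ τ ∈ Set.Icc (0:ℝ) T, 0 ≤ N τ)
    (hN' : ∀ τ ∈ Set.Icc (0:ℝ) T,
      HasDerivAt N (Real.exp (-(c/κ) * N τ * (N τ + τ + κ - 1)) - 2) τ) :
    ∀ τ ∈ Set.Icc (0:ℝ) T,
      κ * Real.exp (-(c/κ) * ∫ σ in (0:ℝ)..τ, N σ) ≤ N τ + τ + κ - 1 ∧
      0 < κ * Real.exp (-(c/κ) * ∫ σ in (0:ℝ)..τ, N σ) := by
  intro τ hτ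
  refine ⟨?_, by positivity⟩
  have hcont : ContinuousOn N (Set.Icc 0 T) := fun x hx => (hN' x hx).continuousAt.continuousWithinAt
  have hint : ∀ x ∈ Set.Icc (0:ℝ) T, IntervalIntegrable N MeasureTheory.volume 0 x := fun x hx =>
    (hcont.mono (by
      rw [Set.uIcc_of_le hx.1]; exact Set.Icc_subset_Icc_right hx.2)).intervalIntegrable
  have hI : ∀ x ∈ Set.Ioo (0:ℝ) T, HasDerivAt (fun t => ∫ σ in (0:ℝ)..t, N σ) (N x) x := by
    intro x hx
    have hx' := Set.Ioo_subset_Icc_self hx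
    exact intervalIntegral.integral_hasDerivAt_right (hint x hx')
      ((hcont.mono Set.Ioo_subset_Icc_self).stronglyMeasurableAtFilter isOpen_Ioo x hx)
      (hN' x hx').continuousAt
  have hIc : ContinuousOn (fun t => ∫ σ in (0:ℝ)..t, N σ) (Set.Icc 0 T) := by
    have h := intervalIntegral.continuousOn_primitive_interval' (hint T ⟨hT.le, le_rfl⟩)
      (Set.left_mem_uIcc)
    rwa [Set.uIcc_of_le hT.le] at h
  -- The integrating factor turns `Q' ≥ -(c/κ) N Q` into monotonicity of `Q * exp ((c/κ) ∫ N)`.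
  have hmono : MonotoneOn
      (fun t => (N t + t + κ - 1) * Real.exp (c / κ * ∫ σ in (0:ℝ)..t, N σ)) (Set.Icc 0 T) := by
    refine monotoneOn_of_hasDerivWithinAt_nonneg (convex_Icc 0 T)
      (f' := fun x => (Real.exp (-(c/κ) * N x * (N x + x + κ - 1)) - 2 + 1) *
          Real.exp (c / κ * ∫ σ in (0:ℝ)..x, N σ) +
        (N x + x + κ - 1) * (Real.exp (c / κ * ∫ σ in (0:ℝ)..x, N σ) * (c / κ * N x)))
      (by fun_prop) ?_ ?_
    · intro x hx
      rw [interior_Icc] at hx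
      exact (((((hN' x (Set.Ioo_subset_Icc_self hx)).add (hasDerivAt_id x)).add_const
        κ).sub_const 1).mul ((hI x hx).const_mul (c / κ)).exp).hasDerivWithinAt
    · intro x _
      have h := Real.add_one_le_exp (-(c/κ) * N x * (N x + x + κ - 1))
      have hE := Real.exp_pos (c / κ * ∫ σ in (0:ℝ)..x, N σ)
      nlinarith [mul_nonneg (sub_nonneg.2 h) hE.le]
  have h := hmono ⟨le_rfl, hT.le⟩ hτ hτ.1
  simp only [hN0, intervalIntegral.integral_same, mul_zero, Real.exp_zero] at h
  rw [neg_mul, Real.exp_neg, ← div_eq_mul_inv, div_le_iff₀ (Real.exp_pos _)]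
  linarith
end

section
/- Let c > 0, κ ≥ 1/2, τ₀ > 0, and let N : [0,τ₀] → ℝ be differentiable with N(0) = 1, N(τ) > 0 for τ ∈ [0,τ₀), N(τ₀) = 0, satisfying N'(τ) = exp(-(c/κ)·N(τ)·(N(τ)+τ+κ-1)) - 2 on [0,τ₀]. Then the function F(τ) = N(τ)·(N(τ)+τ+κ-1) is convex on [0,τ₀]. -/
/-!
Write `G τ = N τ + τ + κ - 1`, so `F = N G`, `e = exp (-(c/κ) F)`, `N' = e - 2` and `G' = e - 1`.

The line `G = 0` is a barrier: where `G < 0` (and `N ≥ 0`) we have `F ≤ 0`, hence `G' ≥ 0`. Since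
`G 0 = κ > 0`, it follows that `G ≥ 0` throughout (`modified_greedy_G_nonneg`). Hence `F ≥ 0`, so
`e ≤ 1`, which gives `N' + 1 ≤ 0` and `N' ≤ 0`. Therefore `F' = N' G + N (N' + 1) ≤ 0`, and
`F'' = -(c/κ) e F' (N + G) + 2 N' (N' + 1)` is a sum of two nonnegative terms.
-/

/-- A function with `G 0 ≥ 0` whose derivative is nonnegative wherever `G` is negative never
becomes negative. -/
theorem modified_greedy_G_nonneg {a : ℝ} {G G' : ℝ → ℝ} (h0 : 0 ≤ G 0)
    (hG : ∀ t ∈ Set.Icc (0:ℝ) a, HasDerivAt G (G' t) t)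
    (hneg : ∀ t ∈ Set.Icc (0:ℝ) a, G t < 0 → 0 ≤ G' t) :
    ∀ t ∈ Set.Icc (0:ℝ) a, 0 ≤ G t := by
  intro t ht
  -- Compare `-G` with the strictly increasing barriers `ε (1 + x)`, then let `ε → 0`.
  have key : ∀ ε > 0, -G t ≤ ε * (1 + t) := by
    intro ε hε
    refine image_le_of_deriv_right_lt_deriv_boundary (f := fun x => -G x) (f' := fun x => -G' x)
      (B := fun x => ε * (1 + x)) (B' := fun _ => ε) (a := 0) (b := a)
      (fun x hx => (hG x hx).neg.continuousAt.continuousWithinAt)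
      (fun x hx => (hG x ⟨hx.1, hx.2.le⟩).neg.hasDerivWithinAt) (by simp; linarith)
      (fun x => by simpa using ((hasDerivAt_id x).const_add 1).const_mul ε) ?_ ht
    intro x hx hxe
    have hpos : 0 < ε * (1 + x) := mul_pos hε (by linarith [hx.1])
    have := hneg x ⟨hx.1, hx.2.le⟩ (by linarith)
    linarith
  by_contra! h
  have h1 : 0 < 1 + t := by linarith [ht.1]
  have := key (-G t / (2 * (1 + t))) (by apply div_pos <;> linarith)
  have h2 : -G t / (2 * (1 + t)) * (1 + t) = -G t / 2 := by field_simp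
  linarith


/-- Convexity lemma for MODIFIED GREEDY: if `κ ≥ 1/2` and `N` solves
`N' = exp(-(c/κ)N(N+τ+κ-1)) - 2` on `[0,τ₀]` with `N(0)=1`, `N > 0` on `[0,τ₀)` and
`N(τ₀) = 0`, then `F(τ) = N(τ)(N(τ)+τ+κ-1)` is convex on `[0,τ₀]`. -/
theorem modified_greedy_F_convex (c κ τ₀ : ℝ) (hc : 0 < c) (hκ : 1/2 ≤ κ) (hτ₀ : 0 < τ₀)
    (N : ℝ → ℝ) (hN0 : N 0 = 1)
    (hNpos : ∀ τ ∈ Set.Ico (0:ℝ) τ₀, 0 < N τ) (hNend : N τ₀ = 0)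
    (hN' : ∀ τ ∈ Set.Icc (0:ℝ) τ₀,
      HasDerivAt N (Real.exp (-(c/κ) * N τ * (N τ + τ + κ - 1)) - 2) τ) :
    ConvexOn ℝ (Set.Icc 0 τ₀) (fun τ => N τ * (N τ + τ + κ - 1)) := by
  have hκ0 : 0 < κ := by linarith
  have hcκ : 0 < c / κ := div_pos hc hκ0
  have hN : ∀ t ∈ Set.Icc (0:ℝ) τ₀, 0 ≤ N t := by
    intro t ht
    rcases ht.2.eq_or_lt with h | h
    · rw [h, hNend]
    · exact (hNpos t ⟨ht.1, h⟩).le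
  set e : ℝ → ℝ := fun t => Real.exp (-(c/κ) * N t * (N t + t + κ - 1)) with he
  have hG' : ∀ t ∈ Set.Icc (0:ℝ) τ₀,
      HasDerivAt (fun t => N t + t + κ - 1) (e t - 1) t := by
    intro t ht
    have := (((hN' t ht).add (hasDerivAt_id t)).add_const κ).sub_const 1
    refine this.congr_deriv ?_
    change Real.exp _ - 2 + 1 = Real.exp _ - 1
    ring
  have hG : ∀ t ∈ Set.Icc (0:ℝ) τ₀, 0 ≤ N t + t + κ - 1 := by
    refine modified_greedy_G_nonneg (by simp [hN0, hκ0.le]) hG' ?_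
    intro t ht hneg
    have : 0 ≤ -(c/κ) * N t * (N t + t + κ - 1) := by
      have := mul_nonneg (mul_nonneg hcκ.le (hN t ht)) (neg_nonneg.2 hneg.le)
      linarith
    linarith [Real.one_le_exp this]
  have hF' : ∀ t ∈ Set.Icc (0:ℝ) τ₀,
      HasDerivAt (fun t => N t * (N t + t + κ - 1))
        ((e t - 2) * (N t + t + κ - 1) + N t * (e t - 1)) t :=
    fun t ht => (hN' t ht).mul (hG' t ht)
  have he' : ∀ t ∈ Set.Icc (0:ℝ) τ₀, HasDerivAt e
      (e t * (-(c/κ) * ((e t - 2) * (N t + t + κ - 1) + N t * (e t - 1)))) t := by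
    intro t ht
    have := ((hF' t ht).const_mul (-(c/κ))).exp
    simpa only [he, mul_assoc] using this
  have hsub : ∀ t ∈ interior (Set.Icc (0:ℝ) τ₀), t ∈ Set.Icc (0:ℝ) τ₀ :=
    fun t ht => interior_subset ht
  refine convexOn_of_hasDerivWithinAt2_nonneg (convex_Icc 0 τ₀)
    (fun t ht => (hF' t ht).continuousAt.continuousWithinAt)
    (fun t ht => (hF' t (hsub t ht)).hasDerivWithinAt)
    (fun t ht => ((((he' t (hsub t ht)).sub_const 2).mul (hG' t (hsub t ht))).add
      ((hN' t (hsub t ht)).mul ((he' t (hsub t ht)).sub_const 1))).hasDerivWithinAt) ?_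
  intro t ht
  have hn := hN t (hsub t ht)
  have hg := hG t (hsub t ht)
  have e0 : 0 < e t := Real.exp_pos _
  have e1 : e t ≤ 1 := by
    refine Real.exp_le_one_iff.2 ?_
    have := mul_nonneg (mul_nonneg hcκ.le hn) hg
    linarith
  change 0 ≤ e t * (-(c/κ) * ((e t - 2) * (N t + t + κ - 1) + N t * (e t - 1))) *
      (N t + t + κ - 1) + (e t - 2) * (e t - 1) + ((e t - 2) * (e t - 1) +
      N t * (e t * (-(c/κ) * ((e t - 2) * (N t + t + κ - 1) + N t * (e t - 1)))))
  -- The derivative of `F` is nonpositive; this is its negation.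
  have hD : 0 ≤ (2 - e t) * (N t + t + κ - 1) + N t * (1 - e t) :=
    add_nonneg (mul_nonneg (by linarith) hg) (mul_nonneg hn (by linarith))
  have h1 := mul_nonneg (mul_nonneg e0.le (mul_nonneg hcκ.le hD)) (add_nonneg hn hg)
  have h2 : 0 ≤ (2 - e t) * (1 - e t) := mul_nonneg (by linarith) (by linarith)
  linarith
end

section
/- Let c > 0, κ ≥ 1/2, τ₀ > 0, and let N : [0,τ₀] → ℝ be differentiable with N(0) = 1, N(τ) > 0 for τ ∈ [0,τ₀), N(τ₀) = 0, satisfying N'(τ) = exp(-(c/κ)·N(τ)·(N(τ)+τ+κ-1)) - 2 on [0,τ₀]. Then τ₀ ≥ c/(2c - 1 + e^{-c}); equivalently, 1 - τ₀ ≤ (c - 1 + e^{-c})/(2c - 1 + e^{-c}). -/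
/-!
Since `N' ≥ -2`, one has `N(τ) ≥ 1 - 2τ`, hence `N + τ ≥ (1 + N)/2 ≥ 1/2`, and `κ ≥ 1/2` makes the
exponent nonpositive. Therefore `N' ≤ -1`, so `N + τ ≤ 1`, and the exponent is at least `-cN`.
Writing `f(x) = 2 - exp(-c x)`, this gives `0 < -N' ≤ f(N)`.

Heuristically `τ₀ ≥ ∫₀¹ dx / f(x) ≥ 1/m` with `m = ∫₀¹ f = (2c - 1 + e^{-c})/c`, by Jensen's
inequality. Using the tangent-line bound `1/f ≥ 2/m - f/m²` that underlies Jensen, no integral is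
needed: with `F(x) = 2x - (1 - e^{-cx})/c` an antiderivative of `f`, the function
`m²τ + 2mN(τ) - F(N(τ))` is nondecreasing, since its derivative `m² + N'(2m - f(N))` is at least
`(m - f(N))²` or at least `m²`. It goes from `m` at `τ = 0` to `m²τ₀` at `τ = τ₀`.
-/

theorem le_of_hasDerivAt_nonneg_Icc {T : ℝ} {f f' : ℝ → ℝ}
    (hf : ∀ x ∈ Set.Icc (0:ℝ) T, HasDerivAt f (f' x) x)
    (hf' : ∀ x ∈ Set.Icc (0:ℝ) T, 0 ≤ f' x) {t : ℝ} (ht : t ∈ Set.Icc (0:ℝ) T) :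
    f 0 ≤ f t := by
  have hmono : MonotoneOn f (Set.Icc (0:ℝ) T) := by
    refine monotoneOn_of_hasDerivWithinAt_nonneg (f' := f') (convex_Icc 0 T)
      (fun x hx => (hf x hx).continuousAt.continuousWithinAt)
      (fun x hx => (hf x (interior_subset hx)).hasDerivWithinAt)
      (fun x hx => hf' x (interior_subset hx))
  exact hmono ⟨le_rfl, ht.1.trans ht.2⟩ ht ht.1


/-- Deterministic core of Theorem 2(b): if `κ ≥ 1/2` and `N` solves
`N' = exp(-(c/κ)N(N+τ+κ-1)) - 2` on `[0,τ₀]` with `N(0)=1`, `N > 0` on `[0,τ₀)` and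
`N(τ₀) = 0`, then `τ₀ ≥ c/(2c-1+e^{-c})`; equivalently,
`1 - τ₀ ≤ (c-1+e^{-c})/(2c-1+e^{-c})`. -/
theorem modified_greedy_tau0_lower_bound (c κ τ₀ : ℝ) (hc : 0 < c) (hκ : 1/2 ≤ κ)
    (hτ₀ : 0 < τ₀)
    (N : ℝ → ℝ) (hN0 : N 0 = 1)
    (hNpos : ∀ τ ∈ Set.Ico (0:ℝ) τ₀, 0 < N τ) (hNend : N τ₀ = 0)
    (hN' : ∀ τ ∈ Set.Icc (0:ℝ) τ₀,
      HasDerivAt N (Real.exp (-(c/κ) * N τ * (N τ + τ + κ - 1)) - 2) τ) :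
    c/(2*c - 1 + Real.exp (-c)) ≤ τ₀ ∧
    1 - τ₀ ≤ (c - 1 + Real.exp (-c))/(2*c - 1 + Real.exp (-c)) := by

  have hκ0 : 0 < κ := by linarith
  have hcκ : 0 < c / κ := div_pos hc hκ0
  have hNnn : ∀ τ ∈ Set.Icc (0:ℝ) τ₀, 0 ≤ N τ := by
    intro τ hτ
    rcases hτ.2.eq_or_lt with h | h
    · rw [h, hNend]
    · exact (hNpos τ ⟨hτ.1, h⟩).le
  have hlow : ∀ τ ∈ Set.Icc (0:ℝ) τ₀, 1 ≤ N τ + 2 * τ := by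
    intro τ hτ
    have := le_of_hasDerivAt_nonneg_Icc (f := fun τ => N τ + 2 * τ)
      (fun x hx => (hN' x hx).add ((hasDerivAt_id x).const_mul 2))
      (fun x _ => by
        have := Real.exp_pos (-(c/κ) * N x * (N x + x + κ - 1))
        linarith) hτ
    simpa [hN0] using this
  have hexp_le : ∀ τ ∈ Set.Icc (0:ℝ) τ₀,
      Real.exp (-(c/κ) * N τ * (N τ + τ + κ - 1)) ≤ 1 := by
    intro τ hτ
    have h1 := hlow τ hτ
    have h2 := hNnn τ hτ
    have h3 : 0 ≤ N τ + τ + κ - 1 := by linarith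
    rw [Real.exp_le_one_iff]
    have := mul_nonneg (mul_nonneg hcκ.le h2) h3
    linarith
  have hup : ∀ τ ∈ Set.Icc (0:ℝ) τ₀, N τ + τ ≤ 1 := by
    intro τ hτ
    have := le_of_hasDerivAt_nonneg_Icc (f := fun τ => -(N τ + τ))
      (fun x hx => ((hN' x hx).add (hasDerivAt_id x)).neg)
      (fun x hx => by
        have := hexp_le x hx
        linarith) hτ
    simp only [hN0] at this
    linarith
  have hexp_ge : ∀ τ ∈ Set.Icc (0:ℝ) τ₀,
      Real.exp (-c * N τ) ≤ Real.exp (-(c/κ) * N τ * (N τ + τ + κ - 1)) := by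
    intro τ hτ
    rw [Real.exp_le_exp]
    have h1 : -c * N τ = -(c/κ) * N τ * κ := by field_simp
    have h2 := mul_nonneg (mul_nonneg hcκ.le (hNnn τ hτ)) (sub_nonneg.2 (hup τ hτ))
    rw [h1]
    linarith
  have hD : 0 < 2*c - 1 + Real.exp (-c) := by
    have := Real.add_one_le_exp (-c)
    linarith
  obtain ⟨m, hm⟩ : ∃ m, m = (2*c - 1 + Real.exp (-c)) / c := ⟨_, rfl⟩
  have hm0 : 0 < m := hm ▸ div_pos hD hc
  have hkey : m ≤ m^2 * τ₀ := by
    have := le_of_hasDerivAt_nonneg_Icc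
      (f := fun τ => m^2 * τ + 2 * m * N τ - (2 * N τ - (1 - Real.exp (-c * N τ)) / c))
      (fun x hx => (((hasDerivAt_id x).const_mul (m^2)).add ((hN' x hx).const_mul (2*m))).sub
        (((hN' x hx).const_mul 2).sub
          ((((hN' x hx).const_mul (-c)).exp.const_sub 1).div_const c)))
      (fun x hx => by
        have h1 := hexp_le x hx
        have h2 := hexp_ge x hx
        generalize Real.exp (-(c/κ) * N x * (N x + x + κ - 1)) = e at *
        generalize Real.exp (-c * N x) = g at *
        have h3 : -(g * (-c * (e - 2))) / c = g * (e - 2) := by field_simp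
        rw [h3]
        -- The sign of `2m - f(N)` decides which bound on `-N'` is the relevant one.
        rcases le_total (2 * m - (2 - g)) 0 with h | h
        · nlinarith [mul_nonneg (sub_nonneg.2 h) (show 0 ≤ 2 - e by linarith), sq_nonneg m]
        · nlinarith [mul_nonneg h (sub_nonneg.2 h2), sq_nonneg (m - (2 - g))])
      (Set.right_mem_Icc.2 hτ₀.le)
    simp only [hN0, hNend, mul_zero, mul_one, Real.exp_zero, sub_self, zero_div] at this
    have h1 : 2 - (1 - Real.exp (-c)) / c = m := by rw [hm]; field_simp; ring
    linarith
  have hmain : c/(2*c - 1 + Real.exp (-c)) ≤ τ₀ := by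
    have h1 : 1 ≤ m * τ₀ := by
      refine le_of_mul_le_mul_left ?_ hm0
      linarith
    rw [hm, div_mul_eq_mul_div, le_div_iff₀ hc] at h1
    rw [div_le_iff₀ hD]
    linarith
  refine ⟨hmain, ?_⟩
  have h2 : (c - 1 + Real.exp (-c))/(2*c - 1 + Real.exp (-c))
      = 1 - c/(2*c - 1 + Real.exp (-c)) := by
    rw [eq_sub_iff_add_eq, ← add_div, div_eq_one_iff_eq hD.ne']
    ring
  linarith
end
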